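/- Let N, K, d_s be integers with N ≥ 1, K > N + d_s ≥ N, d_s ≥ 0, and suppose α = (K−N−d_s)/2 is a nonnegative integer. Let v[n] = 1/√N for 0 ≤ n ≤ N−1 and v[n] = 0 otherwise. Let w_r : ℤ → ℂ be any sequence with w_r[n] = 1/√N for −N−d_s+1 ≤ n ≤ 0, w_r[n] arbitrary for −K+α+1 ≤ n ≤ −N−d_s and for 1 ≤ n ≤ α, and w_r[n] = 0 elsewhere. Then for every integer x with 0 ≤ x ≤ d_s and every integer y, the crossambiguity function satisfies A_{v,w_r}(x,y) = (1/N)·∑_{n=x}^{x+N−1} exp(2πi yn/N); in particular this value does not depend on the roll-off values of w_r outside {−N−d_s+1,…,0}. -/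

import Mathlib

open Complex

/-- The crossambiguity function
`A_{v,w}(x,y) = ∑_{n∈ℤ} v[n−x]·w[−n]·exp(2πi y n/N)`. -/
noncomputable def crossamb (N : ℕ) (v w : ℤ → ℂ) (x y : ℤ) : ℂ :=
  ∑' n : ℤ, v (n - x) * w (-n) * Complex.exp (2 * Real.pi * Complex.I * (y : ℂ) * (n : ℂ) / N)

/-- Let `N ≥ 1`, `d_s ≥ 0`, `K > N + d_s`, and let
`α = (K−N−d_s)/2` be a nonnegative integer.  Let `v[n] = 1/√N` for
`0 ≤ n ≤ N−1` (`0` otherwise), and let `w_r : ℤ → ℂ` be any sequence with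
`w_r[n] = 1/√N` for `−N−d_s+1 ≤ n ≤ 0`, arbitrary values on the roll-off
regions `−K+α+1 ≤ n ≤ −N−d_s` and `1 ≤ n ≤ α`, and `w_r[n] = 0` elsewhere.
Then for every integer `x` with `0 ≤ x ≤ d_s` and every integer `y`,
`A_{v,w_r}(x,y) = (1/N)·∑_{n=x}^{x+N−1} exp(2πi y n/N)`; in particular, this
value does not depend on the roll-off values of `w_r`. -/
theorem stmt12
    (N : ℕ) (K ds α : ℤ) (hN : 0 < N)
    (hds : 0 ≤ ds) (hK : (N : ℤ) + ds < K)
    (hα : 2 * α = K - (N : ℤ) - ds) (hα0 : 0 ≤ α)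
    (v : ℤ → ℂ)
    (hv : ∀ n : ℤ, v n = if 0 ≤ n ∧ n ≤ (N : ℤ) - 1 then ((1 / Real.sqrt N : ℝ) : ℂ) else 0)
    (wr : ℤ → ℂ)
    (hwr1 : ∀ n : ℤ, -(N : ℤ) - ds + 1 ≤ n → n ≤ 0 → wr n = ((1 / Real.sqrt N : ℝ) : ℂ))
    (hwr0 : ∀ n : ℤ, (n ≤ -K + α ∨ α + 1 ≤ n) → wr n = 0) :
    ∀ x y : ℤ, 0 ≤ x → x ≤ ds →
      crossamb N v wr x y =
        (1 / (N : ℂ)) *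
          ∑ n ∈ Finset.Icc x (x + (N : ℤ) - 1),
            Complex.exp (2 * Real.pi * Complex.I * (y : ℂ) * (n : ℂ) / N) := by
  intro x y hx0 hxd
  have hNR : Real.sqrt N * Real.sqrt N = N := Real.mul_self_sqrt (Nat.cast_nonneg N)
  have hsq : ((1 / Real.sqrt N : ℝ) : ℂ) * ((1 / Real.sqrt N : ℝ) : ℂ) = 1 / (N : ℂ) := by
    rw [← Complex.ofReal_mul, div_mul_div_comm, hNR]
    push_cast
    ring
  unfold crossamb
  -- The factor `v (n - x)` vanishes unless `x ≤ n ≤ x + N - 1`.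
  rw [tsum_eq_sum (s := Finset.Icc x (x + (N : ℤ) - 1)), Finset.mul_sum]
  · -- On this window `-n` lies in `[-N - ds + 1, 0]`, where `wr` is constant.
    refine Finset.sum_congr rfl fun n hn => ?_
    rw [Finset.mem_Icc] at hn
    rw [hv, if_pos (by omega), hwr1 (-n) (by omega) (by omega), hsq]
  · intro n hn
    rw [Finset.mem_Icc] at hn
    rw [hv, if_neg (by omega), zero_mul, zero_mul]
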